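/- arXiv:1603.02639 — 2 statements merged into one kernel-verified Lean document; each statement's English description precedes it below -/
import Mathlib

section
/- Let G be a Carnot group and let X₁, …, X_m be a basis of its horizontal layer 𝔊_H. For every X, Y ∈ 𝔊_H, p ∈ G and r > 0, there exists a curve γ ∈ C¹_H([0, r], G) with γ(0) = γ(r) = p, γ'(0) = X, γ'(r) = Y, and sup_t ‖γ'(t)‖ = max(‖X‖, ‖Y‖). -/
open Filter Topology Set Metric

variable {G : Type*} [Group G] [MetricSpace G]
variable {H : Type*} [NormedAddCommGroup H] [NormedSpace ℝ H]

/-- `γ` is a curve of class `C¹_H` on `s` with (horizontal) velocity `γ'`. -/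
def IsC1H (expMap : H → G) (γ : ℝ → G) (γ' : ℝ → H) (s : Set ℝ) : Prop :=
  ContinuousOn γ s ∧ ContinuousOn γ' s ∧
    ∀ t ∈ s, Tendsto (fun u => dist (γ u) (γ t * expMap ((u - t) • γ' t)) / |u - t|)
      (𝓝[s \ {t}] t) (𝓝 0)

/-- The abstract Baire argument giving the local Lipschitz bound. -/
theorem aux_lipschitz (N : ℝ → ℝ) (hN0 : N 0 = 0) (hc : Continuous N)
    (hev : ∀ s, N (-s) = N s)
    (hfl : ∀ φ : ℝ → ℝ, Continuous φ → ∃ D : ℝ → ℝ → ℝ, Continuous (Function.uncurry D) ∧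
      (∀ u t, D u t = D t u) ∧
      ∀ t, ∀ᶠ u in 𝓝 t, |D u t - N ((u - t) * φ t)| ≤ |u - t|) :
    ∃ C δ : ℝ, 0 < δ ∧ ∀ s, |s| < δ → N s ≤ C * |s| := by
  by_contra hno
  -- at every centre there are small scales at which `N` oscillates
  have hosc : ∀ c ε δ : ℝ, 0 < ε → 0 < δ → ∃ h a b : ℝ, 0 < h ∧ h < δ ∧ |a - c| ≤ ε ∧
      |b - c| ≤ ε ∧ 2 * h < |N (h * a) - N (h * b)| := by
    intro c ε δ hε hδ
    by_contra hcon
    push Not at hcon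
    apply hno
    obtain ⟨a, q, ha0, hq0, hq1, hac, hqa⟩ : ∃ a q : ℝ, a ≠ 0 ∧ 0 ≤ q ∧ q < 1 ∧
        |a - c| ≤ ε ∧ q * a = c := by
      rcases le_total 0 c with h | h
      · refine ⟨c + ε, c / (c + ε), by positivity, by positivity, ?_, ?_, ?_⟩
        · rw [div_lt_one (by positivity)]; linarith
        · simp [abs_of_pos hε]
        · field_simp
      · have h1 : c - ε < 0 := by linarith
        refine ⟨c - ε, c / (c - ε), h1.ne, div_nonneg_of_nonpos h h1.le, ?_, ?_, ?_⟩
        · rw [div_lt_one_of_neg h1]; linarith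
        · simp [abs_of_pos hε]
        · field_simp [h1.ne]
    have hstep : ∀ h, 0 ≤ h → h < δ → N (h * a) ≤ N (h * q * a) + 2 * h := by
      intro h h0 hd
      rcases h0.eq_or_lt with h0 | h0
      · subst h0; simp
      · have := hcon h a c h0 hd hac (by simp [hε.le])
        have h2 := le_abs_self (N (h * a) - N (h * c))
        rw [mul_assoc, hqa]; linarith
    have hiter : ∀ n : ℕ, ∀ h, 0 ≤ h → h < δ →
        N (h * a) ≤ N (h * q ^ n * a) + 2 * h / (1 - q) := by
      intro n
      induction n with
      | zero =>
        intro h h0 hd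
        have : 0 ≤ 2 * h / (1 - q) := div_nonneg (by linarith) (by linarith)
        simpa using this
      | succ n ih =>
        intro h h0 hd
        have h1 := hstep h h0 hd
        have h2 := ih (h * q) (by positivity) (by nlinarith)
        have e1 : h * q * q ^ n * a = h * q ^ (n + 1) * a := by ring
        rw [e1] at h2
        have hq : 1 - q ≠ 0 := by linarith
        have e2 : 2 * h / (1 - q) = 2 * (h * q) / (1 - q) + 2 * h := by field_simp; ring
        linarith
    have hlim : ∀ h, 0 ≤ h → h < δ → N (h * a) ≤ 2 * h / (1 - q) := by
      intro h h0 hd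
      have ht : Tendsto (fun n : ℕ => N (h * q ^ n * a) + 2 * h / (1 - q)) atTop
          (𝓝 (N (h * 0 * a) + 2 * h / (1 - q))) := by
        refine Tendsto.add_const _ ((hc.tendsto _).comp ?_)
        exact ((tendsto_pow_atTop_nhds_zero_of_lt_one hq0 hq1).const_mul h).mul_const a
      have := ge_of_tendsto' ht (fun n => hiter n h h0 hd)
      simpa [hN0] using this
    have ha : 0 < |a| := abs_pos.2 ha0
    refine ⟨2 / (1 - q) / |a|, δ * |a|, by positivity, fun s hs => ?_⟩
    have h1 := hlim (|s| / |a|) (by positivity) (by rwa [div_lt_iff₀ ha])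
    have h2 : N (|s| / |a| * a) = N s := by
      rcases abs_cases s with ⟨e, _⟩ | ⟨e, _⟩ <;> rcases abs_cases a with ⟨e', _⟩ | ⟨e', _⟩ <;>
        rw [e, e']
      · congr 1; field_simp
      · rw [← hev s]; congr 1; field_simp
      · rw [← hev s]; congr 1; field_simp
      · congr 1; field_simp
    rw [h2] at h1
    calc N s ≤ _ := h1
      _ = _ := by ring
  -- a generic profile
  let U : ℚ × ℕ → Set (BoundedContinuousFunction ℝ ℝ) := fun i =>
    {φ | ∃ t u : ℝ, t ∈ ball (i.1 : ℝ) (1 / (i.2 + 1)) ∧ u ∈ ball (i.1 : ℝ) (1 / (i.2 + 1)) ∧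
      2 * |u - t| < |N ((u - t) * φ t) - N ((u - t) * φ u)|}
  have hUo : ∀ i, IsOpen (U i) := by
    intro i
    have : U i = ⋃ (t : ℝ) (u : ℝ) (_ : t ∈ ball (i.1 : ℝ) (1 / (i.2 + 1)))
        (_ : u ∈ ball (i.1 : ℝ) (1 / (i.2 + 1))), {φ : BoundedContinuousFunction ℝ ℝ |
        2 * |u - t| < |N ((u - t) * φ t) - N ((u - t) * φ u)|} := by
      ext φ; simp only [U, mem_setOf_eq, mem_iUnion, exists_prop]
    rw [this]
    refine isOpen_iUnion fun t => isOpen_iUnion fun u => isOpen_iUnion fun _ =>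
      isOpen_iUnion fun _ => isOpen_lt continuous_const ?_
    have h1 : ∀ x : ℝ, Continuous fun φ : BoundedContinuousFunction ℝ ℝ => φ x :=
      fun x => (BoundedContinuousFunction.evalCLM ℝ x).continuous
    exact ((hc.comp (continuous_const.mul (h1 t))).sub
      (hc.comp (continuous_const.mul (h1 u)))).abs
  have hUd : ∀ i, Dense (U i) := by
    intro i
    rw [Metric.dense_iff]
    intro φ ε hε
    set x : ℝ := (i.1 : ℝ)
    set ρ : ℝ := 1 / ((i.2 : ℝ) + 1)
    have hρ : 0 < ρ := by positivity
    obtain ⟨η, hη, hηφ⟩ := Metric.continuousAt_iff.1 (φ.continuous.continuousAt (x := x))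
      (ε / 4) (by positivity)
    obtain ⟨h, a, b, h0, hlt, ha, hb, hN⟩ := hosc (φ x) (ε / 4) (min η ρ) (by positivity)
      (lt_min hη hρ)
    have hu : |φ (x + h) - φ x| < ε / 4 := by
      have := @hηφ (x + h) (by
        rw [Real.dist_eq]; simp only [add_sub_cancel_left]; rw [abs_of_pos h0]
        exact hlt.trans_le (min_le_left _ _))
      rwa [Real.dist_eq] at this
    -- the perturbation
    let A : ℝ := a - φ x
    let B : ℝ := b - φ (x + h)
    let l : ℝ → ℝ := fun t => max 0 (min 1 ((t - x) / h))
    have hl : Continuous l := by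
      refine continuous_const.max (continuous_const.min ?_)
      exact (continuous_id.sub continuous_const).div_const h
    have hl0 : ∀ t, 0 ≤ l t := fun t => le_max_left _ _
    have hl1 : ∀ t, l t ≤ 1 := fun t => max_le zero_le_one (min_le_left _ _)
    have hA : |A| ≤ ε / 2 := by simp only [A]; linarith
    have hB : |B| ≤ ε / 2 := by
      simp only [B]
      have : b - φ (x + h) = (b - φ x) - (φ (x + h) - φ x) := by ring
      rw [this]
      exact (abs_sub _ _).trans (by linarith)
    have hψ : ∀ t, ‖(1 - l t) * A + l t * B‖ ≤ ε / 2 := by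
      intro t
      rw [Real.norm_eq_abs, abs_le]
      have := abs_le.1 hA
      have := abs_le.1 hB
      have := hl0 t
      have := hl1 t
      constructor <;> nlinarith
    let ψ : BoundedContinuousFunction ℝ ℝ := BoundedContinuousFunction.ofNormedAddCommGroup
      (fun t => (1 - l t) * A + l t * B) (by fun_prop) (ε / 2) hψ
    refine ⟨φ + ψ, ?_, x, x + h, ?_, ?_, ?_⟩
    · rw [mem_ball, dist_eq_norm, add_sub_cancel_left]
      refine lt_of_le_of_lt ?_ (half_lt_self hε)
      exact BoundedContinuousFunction.norm_ofNormedAddCommGroup_le _ (by positivity) hψ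
    · exact mem_ball_self hρ
    · rw [mem_ball, Real.dist_eq]; simp only [x, add_sub_cancel_left]; rw [abs_of_pos h0]
      exact hlt.trans_le (min_le_right _ _)
    · have e1 : (φ + ψ) x = a := by
        change φ x + ((1 - l x) * A + l x * B) = a
        have : l x = 0 := by simp [l]
        rw [this]; simp [A]
      have e2 : (φ + ψ) (x + h) = b := by
        change φ (x + h) + ((1 - l (x + h)) * A + l (x + h) * B) = b
        have : l (x + h) = 1 := by simp [l, h0.ne']
        rw [this]; simp [B]
      rw [e1, e2, add_sub_cancel_left, abs_of_pos h0]
      exact hN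
  obtain ⟨φ, hφ⟩ := (dense_iInter_of_isOpen hUo hUd).nonempty
  rw [mem_iInter] at hφ
  obtain ⟨D, hDc, hDs, hD⟩ := hfl φ φ.continuous
  let S : ℕ → Set ℝ := fun k => {t | ∀ h : ℝ, |h| ≤ 1 / ((k : ℝ) + 1) →
    |D (t + h) t - N (h * φ t)| ≤ |h|}
  have hSc : ∀ k, IsClosed (S k) := by
    intro k
    have : S k = ⋂ (h : ℝ) (_ : |h| ≤ 1 / ((k : ℝ) + 1)),
        {t | |D (t + h) t - N (h * φ t)| ≤ |h|} := by
      ext t; simp [S]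
    rw [this]
    refine isClosed_iInter fun h => isClosed_iInter fun _ => isClosed_le ?_ continuous_const
    have h1 : Continuous fun t : ℝ => D (t + h) t :=
      hDc.comp ((continuous_id.add continuous_const).prodMk continuous_id)
    exact (h1.sub (hc.comp (continuous_const.mul φ.continuous))).abs
  have hSu : ⋃ k, S k = univ := by
    rw [eq_univ_iff_forall]
    intro t
    obtain ⟨η, hη, hh⟩ := Metric.eventually_nhds_iff.1 (hD t)
    obtain ⟨k, hk⟩ := exists_nat_one_div_lt hη
    refine mem_iUnion.2 ⟨k, fun h hhk => ?_⟩
    have := @hh (t + h) (by rw [Real.dist_eq, add_sub_cancel_left]; exact hhk.trans_lt hk)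
    rwa [add_sub_cancel_left] at this
  obtain ⟨k, x, hx⟩ := nonempty_interior_of_iUnion_of_closed hSc hSu
  obtain ⟨ρ, hρ, hball⟩ := Metric.isOpen_iff.1 isOpen_interior x hx
  set κ : ℝ := 1 / ((k : ℝ) + 1)
  have hκ : 0 < κ := by positivity
  obtain ⟨n, hn⟩ := exists_nat_one_div_lt (show 0 < min (ρ / 2) (κ / 2) by positivity)
  obtain ⟨q, hq1, hq2⟩ := exists_rat_btwn (show x < x + ρ / 2 by linarith)
  obtain ⟨t, u, ht, hu, htu⟩ := hφ (q, n)
  simp only [mem_ball, Real.dist_eq] at ht hu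
  have hn1 := hn.trans_le (min_le_left _ _)
  have hn2 := hn.trans_le (min_le_right _ _)
  have ht' := abs_lt.1 ht
  have hu' := abs_lt.1 hu
  have htS : t ∈ S k := interior_subset (hball (by
    rw [mem_ball, Real.dist_eq, abs_lt]; constructor <;> linarith))
  have huS : u ∈ S k := interior_subset (hball (by
    rw [mem_ball, Real.dist_eq, abs_lt]; constructor <;> linarith))
  have hd : |u - t| ≤ κ := by rw [abs_le]; constructor <;> linarith
  have h1 := htS (u - t) hd
  have h2 := huS (t - u) (by rwa [abs_sub_comm])
  rw [add_sub_cancel] at h1 h2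
  have e : N ((t - u) * φ u) = N ((u - t) * φ u) := by
    rw [← hev]; congr 1; ring
  rw [e, hDs t u, abs_sub_comm t u] at h2
  have h3 : |N ((u - t) * φ t) - N ((u - t) * φ u)| ≤ 2 * |u - t| := by
    have := abs_le.1 h1
    have := abs_le.1 h2
    rw [abs_le]; constructor <;> linarith
  linarith

section group
theorem aux_zero (e : H → G)
    (hexpadd : ∀ (s t : ℝ) (v : H), e ((s + t) • v) = e (s • v) * e (t • v)) : e 0 = 1 := by
  have := hexpadd 0 0 0
  simpa using this

theorem aux_dist (e : H → G)
    (hleft : ∀ a p q : G, dist (a * p) (a * q) = dist p q)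
    (hexpadd : ∀ (s t : ℝ) (v : H), e ((s + t) • v) = e (s • v) * e (t • v))
    (v : H) (q : G) (s t : ℝ) :
    dist (q * e (s • v)) (q * e (t • v)) = dist 1 (e ((s - t) • v)) := by
  have : s = t + (s - t) := by ring
  rw [hleft]
  conv_lhs => rw [this, hexpadd]
  have h := hleft (e (t • v)) (e ((s - t) • v)) 1
  rw [mul_one] at h
  rw [h, dist_comm]

theorem aux_local (e : H → G)
    (hleft : ∀ a p q : G, dist (a * p) (a * q) = dist p q)
    (hexpadd : ∀ (s t : ℝ) (v : H), e ((s + t) • v) = e (s • v) * e (t • v))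
    (hflow : ∀ (q : G) (v : ℝ → H), Continuous v →
      ∃ γ : ℝ → G, γ 0 = q ∧ IsC1H e γ v univ) (X : H) :
    Continuous (fun s : ℝ => dist 1 (e (s • X))) ∧
    ∃ C δ : ℝ, 0 < δ ∧ ∀ s : ℝ, |s| < δ → dist 1 (e (s • X)) ≤ C * |s| := by
  have he0 := aux_zero e hexpadd
  have hd := aux_dist e hleft hexpadd X
  have hev : ∀ s : ℝ, dist 1 (e ((-s) • X)) = dist 1 (e (s • X)) := by
    intro s
    have h1 := hd 1 0 s
    have h2 := hd 1 s 0
    rw [zero_sub] at h1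
    rw [sub_zero] at h2
    rw [← h1, ← h2, dist_comm]
  -- quotient bound
  have hquot : ∀ (γ : ℝ → G) (v : ℝ → H), IsC1H e γ v univ → ∀ t, ∀ᶠ u in 𝓝 t,
      dist (γ u) (γ t * e ((u - t) • v t)) ≤ |u - t| := by
    intro γ v hγ t
    have h1 := hγ.2.2 t (mem_univ t)
    have h2 := h1.eventually (gt_mem_nhds (show (0:ℝ) < 1 by norm_num))
    rw [eventually_nhdsWithin_iff] at h2
    filter_upwards [h2] with u hu
    by_cases hut : u = t
    · subst hut; simp [he0]
    · have := hu ⟨mem_univ _, hut⟩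
      rw [div_lt_one (abs_pos.2 (sub_ne_zero.2 hut))] at this
      exact this.le
  have hc0 : Tendsto (fun s : ℝ => dist 1 (e (s • X))) (𝓝 0) (𝓝 0) := by
    obtain ⟨γ, hγ0, hγ⟩ := hflow 1 (fun _ => X) continuous_const
    have h1 := hquot γ _ hγ 0
    simp only [hγ0, sub_zero, one_mul] at h1
    have hγc : Continuous γ := by simpa [continuousOn_univ] using hγ.1
    have h2 : Tendsto (fun s : ℝ => dist 1 (γ s) + |s|) (𝓝 0) (𝓝 0) := by
      have : Continuous (fun s : ℝ => dist 1 (γ s) + |s|) := by fun_prop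
      simpa [hγ0] using this.tendsto 0
    refine squeeze_zero' (Eventually.of_forall fun _ => dist_nonneg) ?_ h2
    filter_upwards [h1] with u hu
    exact (dist_triangle _ (γ u) _).trans (by linarith)
  have hc : Continuous (fun s : ℝ => dist 1 (e (s • X))) := by
    rw [continuous_iff_continuousAt]
    intro t
    rw [ContinuousAt, tendsto_iff_dist_tendsto_zero]
    have h1 : Tendsto (fun s : ℝ => s - t) (𝓝 t) (𝓝 0) := by
      have : Continuous fun s : ℝ => s - t := by fun_prop
      simpa using this.tendsto t
    refine squeeze_zero (fun _ => dist_nonneg) (fun s => ?_) (hc0.comp h1)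
    have h2 := hd 1 s t
    rw [one_mul, one_mul] at h2
    simp only [Function.comp]
    rw [← h2, Real.dist_eq, dist_comm 1 (e (s • X)), dist_comm 1 (e (t • X))]
    exact abs_dist_sub_le _ _ _
  refine ⟨hc, aux_lipschitz _ (by simp [he0]) hc hev ?_⟩
  intro φ hφ
  obtain ⟨γ, -, hγ⟩ := hflow 1 (fun t => φ t • X) (hφ.smul continuous_const)
  have hγc : Continuous γ := by simpa [continuousOn_univ] using hγ.1
  refine ⟨fun u t => dist (γ u) (γ t), ?_, fun u t => dist_comm _ _, fun t => ?_⟩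
  · exact (hγc.comp continuous_fst).dist (hγc.comp continuous_snd)
  · filter_upwards [hquot γ _ hγ t] with u hu
    rw [smul_smul] at hu
    refine le_trans ?_ hu
    have h1 := hleft (γ t) 1 (e (((u - t) * φ t) • X))
    rw [mul_one] at h1
    rw [← h1, dist_comm (γ t)]
    exact abs_dist_sub_le _ _ _

theorem aux_littleo (N : ℝ → ℝ) (hpos : ∀ s, 0 ≤ N s)
    (hN : ∃ C δ : ℝ, 0 < δ ∧ ∀ s : ℝ, |s| < δ → N s ≤ C * |s|)
    (f : ℝ → ℝ) (g t : ℝ) (hf : HasDerivAt f g t) :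
    Tendsto (fun u => N (f u - (f t + (u - t) * g)) / |u - t|) (𝓝 t) (𝓝 0) := by
  obtain ⟨C, δ, hδ, hC⟩ := hN
  have h1 := hasDerivAt_iff_isLittleO.1 hf
  have e : (fun u => f u - f t - (u - t) • g) = fun u => f u - (f t + (u - t) * g) := by
    ext u; simp only [smul_eq_mul]; ring
  rw [e] at h1
  have h0 : Tendsto (fun u => f u - (f t + (u - t) * g)) (𝓝 t) (𝓝 0) := by
    have h2 : ContinuousAt (fun u => f u - (f t + (u - t) * g)) t :=
      hf.continuousAt.sub (by fun_prop)
    simpa [ContinuousAt] using h2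
  have h2 : (fun u => N (f u - (f t + (u - t) * g))) =O[𝓝 t]
      (fun u => f u - (f t + (u - t) * g)) := by
    refine Asymptotics.IsBigO.of_bound C ?_
    filter_upwards [h0.eventually (Metric.ball_mem_nhds 0 hδ)] with u hu
    rw [Real.norm_of_nonneg (hpos _), Real.norm_eq_abs]
    exact hC _ (by simpa using hu)
  exact ((h2.trans_isLittleO h1).norm_right).tendsto_div_nhds_zero

theorem aux_half (e : H → G)
    (hleft : ∀ a p q : G, dist (a * p) (a * q) = dist p q)
    (hexpadd : ∀ (s t : ℝ) (v : H), e ((s + t) • v) = e (s • v) * e (t • v))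
    (hflow : ∀ (q : G) (v : ℝ → H), Continuous v →
      ∃ γ : ℝ → G, γ 0 = q ∧ IsC1H e γ v univ) (X Y : H) (p : G)
    (f₁ f₂ : ℝ → ℝ) (g₁ t : ℝ) (h₁ : HasDerivAt f₁ g₁ t) (h₂ : HasDerivAt f₂ 0 t)
    (h0 : f₂ t = 0) :
    ContinuousAt (fun u => p * e (f₁ u • X) * e (f₂ u • Y)) t ∧
    Tendsto (fun u => dist (p * e (f₁ u • X) * e (f₂ u • Y))
      (p * e (f₁ t • X) * e (f₂ t • Y) * e ((u - t) • (g₁ • X))) / |u - t|) (𝓝 t) (𝓝 0) := by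
  have he0 := aux_zero e hexpadd
  obtain ⟨hcX, hX⟩ := aux_local e hleft hexpadd hflow X
  obtain ⟨hcY, hY⟩ := aux_local e hleft hexpadd hflow Y
  have key : ∀ u α : ℝ, dist (p * e (f₁ u • X) * e (f₂ u • Y)) (p * e (α • X)) ≤
      dist 1 (e ((f₂ u) • Y)) + dist 1 (e ((f₁ u - α) • X)) := by
    intro u α
    refine (dist_triangle _ (p * e (f₁ u • X)) _).trans ?_
    rw [aux_dist e hleft hexpadd]
    have := aux_dist e hleft hexpadd Y (p * e (f₁ u • X)) (f₂ u) 0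
    simp only [zero_smul, he0, mul_one, sub_zero] at this
    rw [this]
  constructor
  · rw [ContinuousAt, tendsto_iff_dist_tendsto_zero]
    simp only [h0, zero_smul, he0, mul_one]
    have hs : Tendsto (fun u => dist 1 (e ((f₂ u) • Y)) + dist 1 (e ((f₁ u - f₁ t) • X)))
        (𝓝 t) (𝓝 0) := by
      have a1 : ContinuousAt (fun u => dist 1 (e ((f₂ u) • Y))) t :=
        hcY.continuousAt.comp (f := f₂) h₂.continuousAt
      have a2 : ContinuousAt (fun u => dist 1 (e ((f₁ u - f₁ t) • X))) t :=
        hcX.continuousAt.comp (f := fun u => f₁ u - f₁ t)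
          (h₁.continuousAt.sub continuousAt_const)
      have := a1.add a2
      rw [ContinuousAt] at this
      simpa only [Pi.add_def, h0, sub_self, zero_smul, he0, dist_self, add_zero] using this
    exact squeeze_zero (fun _ => dist_nonneg) (fun u => key u (f₁ t)) hs
  · have b1 := aux_littleo _ (fun s => dist_nonneg) hX f₁ g₁ t h₁
    have b2 := aux_littleo _ (fun s => dist_nonneg) hY f₂ 0 t h₂
    have b3 := b2.add b1
    rw [add_zero] at b3
    refine squeeze_zero (fun _ => by positivity) (fun u => ?_) b3
    rw [← add_div]
    gcongr
    have := key u (f₁ t + (u - t) * g₁)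
    simp only [h0, zero_smul, he0, mul_one, mul_zero, add_zero, sub_zero]
    rw [smul_smul, mul_assoc p (e (f₁ t • X)), ← hexpadd]
    exact this

end group

/-- The bump primitive: `t (1 - t/c)²` up to `c`, then zero. -/
theorem aux_bump (c : ℝ) (hc : 0 < c) : ∃ f g : ℝ → ℝ, (∀ t, HasDerivAt f (g t) t) ∧
    Continuous g ∧ f 0 = 0 ∧ g 0 = 1 ∧ (∀ t, c ≤ t → f t = 0 ∧ g t = 0) ∧
    ∀ t, 0 ≤ t → |g t| ≤ 1 := by
  have hm : ∀ x : ℝ, HasDerivAt (fun x : ℝ => (max 0 x) ^ 2) (2 * max 0 x) x := by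
    intro x
    rcases lt_trichotomy x 0 with hx | hx | hx
    · rw [max_eq_left hx.le, mul_zero]
      refine (hasDerivAt_const x (0:ℝ)).congr_of_eventuallyEq ?_
      filter_upwards [gt_mem_nhds hx] with y hy
      simp [max_eq_left hy.le]
    · subst hx
      rw [hasDerivAt_iff_isLittleO]
      simp only [max_self, mul_zero, smul_zero, sub_zero]
      have h1 : (fun x : ℝ => (max 0 x) ^ 2 - 0 ^ 2) =O[𝓝 0] (fun x : ℝ => x ^ 2) := by
        refine Asymptotics.IsBigO.of_bound 1 (Eventually.of_forall fun x => ?_)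
        rcases le_total 0 x with h | h
        · simp [max_eq_right h]
        · simp [max_eq_left h]; positivity
      exact h1.trans_isLittleO (by simpa using Asymptotics.isLittleO_pow_id (𝕜 := ℝ) one_lt_two)
    · rw [max_eq_right hx.le]
      have : HasDerivAt (fun y : ℝ => y ^ 2) (2 * x) x := by simpa using hasDerivAt_pow 2 x
      refine this.congr_of_eventuallyEq ?_
      filter_upwards [lt_mem_nhds hx] with y hy
      simp [max_eq_right hy.le]
  refine ⟨fun t => t * (max 0 (1 - t / c)) ^ 2,
    fun t => (max 0 (1 - t / c)) ^ 2 + t * (2 * max 0 (1 - t / c) * (-(1 / c))), ?_, ?_, ?_, ?_,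
    ?_, ?_⟩
  · intro t
    have h1 : HasDerivAt (fun t : ℝ => 1 - t / c) (-(1 / c)) t :=
      ((hasDerivAt_id t).div_const c).const_sub 1
    have h2 := (hasDerivAt_id t).mul ((hm (1 - t / c)).comp t h1)
    simpa [Function.comp_def, Pi.mul_def] using h2
  · fun_prop
  · simp
  · simp
  · intro t ht
    have : max 0 (1 - t / c) = 0 := max_eq_left (by
      have : 1 ≤ t / c := by rwa [le_div_iff₀ hc, one_mul]
      linarith)
    simp [this]
  · intro t ht
    have hx : 0 ≤ t / c := by positivity
    have e : ∀ m : ℝ, t * (2 * m * (-(1 / c))) = -2 * (t / c) * m := by intro m; ring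
    simp only [e]
    generalize t / c = x at hx
    rcases le_total 0 (1 - x) with h | h
    · rw [max_eq_right h, abs_le]; constructor <;> nlinarith [sq_nonneg (3 * x - 2)]
    · simp [max_eq_left h]

/-- In a Carnot group, for every pair of horizontal vectors `X, Y`, every point `p` and
every `r > 0` there is a horizontal `C¹` curve `γ` on `[0, r]` with
`γ(0) = γ(r) = p`, `γ'(0) = X`, `γ'(r) = Y` and `sup_t ‖γ'(t)‖ = max(‖X‖, ‖Y‖)`. -/
theorem connect_velocities_at_point
    (expMap : H → G)
    (hleft : ∀ a p q : G, dist (a * p) (a * q) = dist p q)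
    (hexpadd : ∀ (s t : ℝ) (v : H), expMap ((s + t) • v) = expMap (s • v) * expMap (t • v))
    -- in a Carnot group every continuous horizontal velocity profile integrates to a curve
    (hflow : ∀ (q : G) (v : ℝ → H), Continuous v →
      ∃ γ : ℝ → G, γ 0 = q ∧ IsC1H expMap γ v univ)
    (X Y : H) (p : G) (r : ℝ) (hr : 0 < r) :
    ∃ γ γ' : _, IsC1H expMap γ γ' (Icc 0 r) ∧
      γ 0 = p ∧ γ r = p ∧ γ' 0 = X ∧ γ' r = Y ∧
      (∀ t ∈ Icc (0:ℝ) r, ‖γ' t‖ ≤ max ‖X‖ ‖Y‖) := by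
  obtain ⟨f, g, hfg, hgc, hf0, hg0, hz, hb⟩ := aux_bump (r / 2) (by positivity)
  have he0 := aux_zero expMap hexpadd
  have hder2 : ∀ t, HasDerivAt (fun t => -f (r - t)) (g (r - t)) t := by
    intro t
    have h1 : HasDerivAt (fun t : ℝ => r - t) (-1) t := (hasDerivAt_id t).const_sub r
    have h2 := ((hfg (r - t)).comp t h1).neg
    simpa [Function.comp_def, Pi.neg_def] using h2
  have hsplit : ∀ t, t ≤ r / 2 → f (r - t) = 0 ∧ g (r - t) = 0 :=
    fun t ht => hz _ (by linarith)
  let γ : ℝ → G := fun u => p * expMap (f u • X) * expMap ((-f (r - u)) • Y)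
  let γ' : ℝ → H := fun u => g u • X + g (r - u) • Y
  have hcomm : γ = fun u => p * expMap ((-f (r - u)) • Y) * expMap (f u • X) := by
    ext u
    rcases le_total u (r / 2) with h | h
    · simp [γ, (hsplit u h).1, he0]
    · simp [γ, (hz u h).1, he0]
  have hall : ∀ t, ContinuousAt γ t ∧
      Tendsto (fun u => dist (γ u) (γ t * expMap ((u - t) • γ' t)) / |u - t|) (𝓝 t) (𝓝 0) := by
    intro t
    rcases le_total t (r / 2) with h | h
    · have h2 := hder2 t
      rw [(hsplit t h).2] at h2
      have := aux_half expMap hleft hexpadd hflow X Y p f (fun t => -f (r - t)) (g t) t (hfg t)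
        h2 (by simp [(hsplit t h).1])
      have e : γ' t = g t • X := by simp [γ', (hsplit t h).2]
      rw [e]
      exact this
    · have h2 := hfg t
      rw [(hz t h).2] at h2
      have := aux_half expMap hleft hexpadd hflow Y X p (fun t => -f (r - t)) f (g (r - t)) t
        (hder2 t) h2 (hz t h).1
      have e : γ' t = g (r - t) • Y := by simp [γ', (hz t h).2]
      rw [e, hcomm]
      exact this
  refine ⟨γ, γ', ⟨?_, ?_, ?_⟩, ?_, ?_, ?_, ?_, ?_⟩
  · exact fun t _ => (hall t).1.continuousWithinAt
  · have : Continuous γ' := by fun_prop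
    exact this.continuousOn
  · exact fun t _ => (hall t).2.mono_left nhdsWithin_le_nhds
  · simp [γ, hf0, (hz r (by linarith)).1, he0]
  · simp [γ, hf0, (hz r (by linarith)).1, he0]
  · have h1 := (hsplit 0 (by positivity)).2
    simp only [sub_zero] at h1
    simp [γ', hg0, h1]
  · simp [γ', hg0, (hz r (by linarith)).2]
  · intro t ht
    rcases le_total t (r / 2) with h | h
    · have e : γ' t = g t • X := by simp [γ', (hsplit t h).2]
      rw [e, norm_smul, Real.norm_eq_abs]
      refine le_trans ?_ (le_max_left _ _)
      exact mul_le_of_le_one_left (norm_nonneg _) (hb t ht.1)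
    · have e : γ' t = g (r - t) • Y := by simp [γ', (hz t h).2]
      rw [e, norm_smul, Real.norm_eq_abs]
      refine le_trans ?_ (le_max_right _ _)
      exact mul_le_of_le_one_left (norm_nonneg _) (hb _ (by linarith [ht.2]))
end

section
/- For every Carnot group G, the zero horizontal vector 0 ∈ 𝔊_H is pliable: for every ε > 0, the set {β(1) ∈ G : β ∈ C¹_H([0,1], G), ‖β'‖_∞ < ε, (β, β')(0) = (0_G, 0)} is a neighborhood of 0_G in G, and moreover one may additionally require β'(1) = 0. -/
open Filter Topology Set Metric

variable {G : Type*} [Group G] [MetricSpace G]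
variable {H : Type*} [NormedAddCommGroup H] [NormedSpace ℝ H]

open BoundedContinuousFunction in
/-- Bump interpolation used to perturb a continuous function at two points. -/
lemma zvp_perturb (c : ℝ →ᵇ ℝ) (u u' x y r : ℝ) (huu : u < u') (hr : 0 ≤ r)
    (hx : |x - c u| ≤ r) (hy : |y - c u'| ≤ r) :
    ∃ d : ℝ →ᵇ ℝ, dist d c ≤ r ∧ d u = x ∧ d u' = y := by
  set p : ℝ → ℝ := fun s => max (-r) (min r
    ((x - c u) + (s - u) / (u' - u) * ((y - c u') - (x - c u)))) with hp
  have hpc : Continuous p := by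
    rw [hp]; fun_prop
  have hpb : ∀ s, |p s| ≤ r := by
    intro s
    rw [abs_le]
    refine ⟨le_max_left _ _, max_le (by linarith) (min_le_left _ _)⟩
  let P : ℝ →ᵇ ℝ := BoundedContinuousFunction.ofNormedAddCommGroup p hpc r (by simpa using hpb)
  have hne : u' - u ≠ 0 := by linarith
  rw [abs_le] at hx hy
  refine ⟨c + P, ?_, ?_, ?_⟩
  · rw [dist_eq_norm, add_sub_cancel_left]
    exact BoundedContinuousFunction.norm_ofNormedAddCommGroup_le _ hr _
  · have : p u = x - c u := by
      simp only [hp, sub_self, zero_div, zero_mul, add_zero]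
      rw [min_eq_right hx.2, max_eq_right hx.1]
    change c u + p u = x
    rw [this]; ring
  · have : p u' = y - c u' := by
      simp only [hp]
      rw [div_self hne, one_mul, add_sub_cancel, min_eq_right hy.2, max_eq_right hy.1]
    change c u' + p u' = y
    rw [this]; ring

/-- Iteration: a small-scale comparison forces a linear bound. -/
lemma zvp_iter (f : ℝ → ℝ) (hf0 : Tendsto f (𝓝 0) (𝓝 0)) (q K s₀ : ℝ) (hq0 : 0 ≤ q) (hq : q < 1)
    (hK : 0 ≤ K)
    (h : ∀ s, 0 < s → s < s₀ → f s ≤ f (q * s) + K * s) (hq0' : 0 < q) :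
    ∀ s, 0 < s → s < s₀ → f s ≤ K / (1 - q) * s := by
  intro s hs hs0
  have h1 : ∀ m : ℕ, f s ≤ f (q ^ m * s) + K / (1 - q) * s := by
    have h2 : ∀ m : ℕ, f s ≤ f (q ^ m * s) + K * s * ∑ i ∈ Finset.range m, q ^ i := by
      intro m
      induction m with
      | zero => simp
      | succ m ih =>
        have hpos : 0 < q ^ m * s := by positivity
        have hle : q ^ m * s ≤ s := by
          have := pow_le_one₀ (n := m) hq0 hq.le
          nlinarith
        have := h _ hpos (by linarith)
        rw [Finset.sum_range_succ, pow_succ']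
        rw [← mul_assoc] at this
        nlinarith
    intro m
    refine (h2 m).trans ?_
    have h3 : ∑ i ∈ Finset.range m, q ^ i ≤ (1 - q)⁻¹ := by
      rw [← tsum_geometric_of_lt_one hq0 hq]
      exact (summable_geometric_of_lt_one hq0 hq).sum_le_tsum _ (fun i _ => by positivity)
    have : K * s * ∑ i ∈ Finset.range m, q ^ i ≤ K * s * (1 - q)⁻¹ := by
      gcongr
    have e : K / (1 - q) * s = K * s * (1 - q)⁻¹ := by ring
    rw [e]; linarith
  have h4 : Tendsto (fun m : ℕ => f (q ^ m * s) + K / (1 - q) * s) atTop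
      (𝓝 (0 + K / (1 - q) * s)) := by
    refine Tendsto.add_const _ (hf0.comp ?_)
    simpa using (tendsto_pow_atTop_nhds_zero_of_lt_one hq0 hq).mul_const s
  have := ge_of_tendsto' h4 h1
  linarith

open BoundedContinuousFunction in
/-- Baire category argument: if every bounded continuous profile satisfies the comparison on some
interval and some scale, then `f` has a linear bound at `0`. -/
lemma zvp_baire (f : ℝ → ℝ) (hfc : Continuous f) (hf0 : f 0 = 0) (heven : ∀ s, f (-s) = f s)
    (h : ∀ c : ℝ →ᵇ ℝ, ∃ (a b : ℝ) (n : ℕ), a < b ∧ ∀ u ∈ Ioo a b, ∀ u' ∈ Ioo a b,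
      |u - u'| < 1 / (n + 1 : ℝ) → |f ((u - u') * c u) - f ((u - u') * c u')| ≤ 2 * |u - u'|) :
    ∃ K s₀ : ℝ, 0 ≤ K ∧ 0 < s₀ ∧ ∀ s, |s| < s₀ → f s ≤ K * |s| := by
  let A : ({p : ℚ × ℚ // p.1 < p.2} × ℕ) → Set (ℝ →ᵇ ℝ) := fun i =>
    {c | ∀ u ∈ Ioo (i.1.1.1 : ℝ) i.1.1.2, ∀ u' ∈ Ioo (i.1.1.1 : ℝ) i.1.1.2,
      |u - u'| < 1 / (i.2 + 1 : ℝ) →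
        |f ((u - u') * c u) - f ((u - u') * c u')| ≤ 2 * |u - u'|}
  have hAc : ∀ i, IsClosed (A i) := by
    intro i
    simp only [A, ofPred_forall]
    refine isClosed_iInter fun u => isClosed_iInter fun _ => isClosed_iInter fun u' =>
      isClosed_iInter fun _ => isClosed_iInter fun _ => ?_
    have e1 : Continuous fun c : ℝ →ᵇ ℝ => c u := continuous_eval_const u
    have e2 : Continuous fun c : ℝ →ᵇ ℝ => c u' := continuous_eval_const u'
    refine isClosed_le ?_ continuous_const
    fun_prop
  have hAu : ⋃ i, A i = univ := by
    refine eq_univ_of_forall fun c => ?_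
    obtain ⟨a, b, n, hab, hc⟩ := h c
    obtain ⟨m, hm1, hm2⟩ := exists_rat_btwn hab
    obtain ⟨m', hm1', hm2'⟩ := exists_rat_btwn hm2
    refine mem_iUnion.2 ⟨(⟨(m, m'), by exact_mod_cast hm1'⟩, n), ?_⟩
    intro u hu u' hu' hd
    exact hc u ⟨hm1.trans hu.1, hu.2.trans hm2'⟩ u' ⟨hm1.trans hu'.1, hu'.2.trans hm2'⟩ hd
  obtain ⟨⟨⟨⟨a, b⟩, hab⟩, n⟩, c, hcint⟩ := nonempty_interior_of_iUnion_of_closed hAc hAu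
  have hab' : (a : ℝ) < b := by exact_mod_cast hab
  rw [mem_interior_iff_mem_nhds, Metric.mem_nhds_iff] at hcint
  obtain ⟨r, hr, hball⟩ := hcint
  obtain ⟨u₀, hu₀⟩ := exists_between hab'
  have hcc : ∀ᶠ u in 𝓝 u₀, |c u - c u₀| < r / 4 := by
    have := Metric.continuousAt_iff'.1 (c.continuous.continuousAt (x := u₀)) (r / 4) (by positivity)
    simpa [Real.dist_eq] using this
  obtain ⟨η, hη, hηc⟩ := Metric.eventually_nhds_iff.1
    (hcc.and (Ioo_mem_nhds hu₀.1 hu₀.2))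
  have hn : (0 : ℝ) < 1 / (n + 1 : ℝ) := by positivity
  set δ₀ := min η (1 / (n + 1 : ℝ)) with hδ₀
  have hδpos : 0 < δ₀ := lt_min hη hn
  have key : ∀ x y : ℝ, |x - c u₀| ≤ r / 4 → |y - c u₀| ≤ r / 4 → ∀ δ, 0 < δ → δ < δ₀ →
      |f (δ * x) - f (δ * y)| ≤ 2 * δ := by
    intro x y hx hy δ hδ hδ'
    have hδη : δ < η := hδ'.trans_le (min_le_left _ _)
    have hδn : δ < 1 / (n + 1 : ℝ) := hδ'.trans_le (min_le_right _ _)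
    obtain ⟨h1, h2⟩ := hηc (y := u₀ + δ) (by simpa [Real.dist_eq, abs_of_pos hδ] using hδη)
    have hx' : |x - c u₀| ≤ r / 2 := by linarith
    have hy' : |y - c (u₀ + δ)| ≤ r / 2 := by
      rw [abs_le] at *; rw [abs_lt] at h1
      constructor <;> linarith [h1.1, h1.2]
    obtain ⟨d, hd, hdu, hdu'⟩ := zvp_perturb c u₀ (u₀ + δ) x y (r / 2) (by linarith)
      (by positivity) hx' hy'
    have hdA := hball (show d ∈ Metric.ball c r by rw [Metric.mem_ball]; linarith)
    have := hdA u₀ hu₀ (u₀ + δ) h2 (by simpa [abs_of_pos hδ] using hδn)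
    rw [hdu, hdu'] at this
    have e : u₀ - (u₀ + δ) = -δ := by ring
    rw [e, neg_mul, neg_mul, heven, heven, abs_neg, abs_of_pos hδ] at this
    exact this
  have hft : Tendsto f (𝓝 0) (𝓝 0) := by simpa [hf0] using hfc.tendsto 0
  have fin : ∃ x y : ℝ, 0 < y ∧ y < x ∧ ∀ δ, 0 < δ → δ < δ₀ →
      |f (δ * x) - f (δ * y)| ≤ 2 * δ := by
    rcases le_total 0 (c u₀) with h0 | h0
    · refine ⟨c u₀ + r / 4, c u₀ + r / 8, by positivity, by linarith, key _ _ ?_ ?_⟩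
      · rw [add_sub_cancel_left, abs_of_pos (by positivity)]
      · rw [add_sub_cancel_left, abs_of_pos (by positivity)]; linarith
    · refine ⟨-c u₀ + r / 4, -c u₀ + r / 8, by linarith, by linarith, ?_⟩
      intro δ hδ hδ'
      have := key (-(-c u₀ + r / 4)) (-(-c u₀ + r / 8)) ?_ ?_ δ hδ hδ'
      · rwa [mul_neg, mul_neg, heven, heven] at this
      · rw [abs_le]; constructor <;> linarith
      · rw [abs_le]; constructor <;> linarith
  obtain ⟨x, y, hy, hxy, hk⟩ := fin
  have hx : 0 < x := hy.trans hxy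
  have hq1 : y / x < 1 := (div_lt_one hx).2 hxy
  have it := zvp_iter f hft (y / x) (2 / x) (δ₀ * x) (by positivity) hq1
    (by positivity) (by
      intro s hs hs'
      have := hk (s / x) (by positivity) ((div_lt_iff₀ hx).2 hs')
      rw [abs_le] at this
      have e1 : s / x * x = s := by field_simp
      have e2 : s / x * y = y / x * s := by ring
      have e3 : 2 / x * s = 2 * (s / x) := by ring
      rw [e1, e2] at this
      rw [e3]; linarith [this.2]) (by positivity)
  have hq2 : 0 < 1 - y / x := by linarith
  refine ⟨2 / x / (1 - y / x), δ₀ * x, by positivity, by positivity, ?_⟩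
  intro s hs
  rcases lt_trichotomy s 0 with h1 | h1 | h1
  · rw [abs_of_neg h1] at hs ⊢
    rw [← heven]
    exact it _ (by linarith) hs
  · simp [h1, hf0]
  · rw [abs_of_pos h1] at hs ⊢
    exact it _ h1 hs

section zvp
variable (expMap : H → G)

lemma zvp_exp_zero (hexpadd : ∀ (s t : ℝ) (v : H),
    expMap ((s + t) • v) = expMap (s • v) * expMap (t • v)) : expMap 0 = 1 := by
  have := hexpadd 0 0 0
  simpa using this

lemma zvp_dist (hleft : ∀ a p q : G, dist (a * p) (a * q) = dist p q)
    (hexpadd : ∀ (s t : ℝ) (v : H), expMap ((s + t) • v) = expMap (s • v) * expMap (t • v))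
    (g : G) (v : H) (s t : ℝ) :
    dist (g * expMap (s • v)) (g * expMap (t • v)) = dist 1 (expMap ((t - s) • v)) := by
  rw [hleft]
  have : expMap (t • v) = expMap (s • v) * expMap ((t - s) • v) := by
    rw [← hexpadd]; congr 2; ring
  rw [this]
  conv_lhs => rw [← mul_one (expMap (s • v))]
  rw [mul_assoc, one_mul, hleft]

lemma zvp_cont (hleft : ∀ a p q : G, dist (a * p) (a * q) = dist p q)
    (hexpadd : ∀ (s t : ℝ) (v : H), expMap ((s + t) • v) = expMap (s • v) * expMap (t • v))
    (hflow : ∀ (q : G) (v : ℝ → H), Continuous v →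
      ∃ γ : ℝ → G, γ 0 = q ∧ IsC1H expMap γ v univ) (v : H) :
    Continuous fun s : ℝ => expMap (s • v) := by
  have h0 := zvp_exp_zero expMap hexpadd
  have hz : Tendsto (fun s : ℝ => dist 1 (expMap (s • v))) (𝓝 0) (𝓝 0) := by
    obtain ⟨γ, hγ0, hc, -, hd⟩ := hflow 1 (fun _ => v) continuous_const
    have hd0 := hd 0 (mem_univ _)
    have hc0 : Tendsto (fun u => dist (γ u) 1) (𝓝 0) (𝓝 0) := by
      have : Tendsto γ (𝓝 0) (𝓝 1) := by
        have := (continuousOn_univ.1 hc).tendsto 0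
        rwa [hγ0] at this
      exact tendsto_iff_dist_tendsto_zero.1 this
    have hab : Tendsto (fun u : ℝ => |u|) (𝓝[≠] 0) (𝓝 0) := by
      have : Tendsto (fun u : ℝ => |u|) (𝓝 0) (𝓝 |0|) := continuous_abs.tendsto 0
      rw [abs_zero] at this
      exact this.mono_left nhdsWithin_le_nhds
    rw [← compl_eq_univ_sdiff] at hd0
    have hprod := (hd0.mul hab).add (hc0.mono_left nhdsWithin_le_nhds)
    have hp : Tendsto (fun s : ℝ => dist 1 (expMap (s • v))) (𝓝[≠] 0) (𝓝 0) := by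
      refine squeeze_zero' (Eventually.of_forall fun _ => dist_nonneg) ?_
        (by simpa only [zero_mul, add_zero] using hprod)
      filter_upwards [self_mem_nhdsWithin] with u hu
      have hu' : |u| ≠ 0 := abs_ne_zero.2 hu
      rw [hγ0]
      simp only [sub_zero, one_mul]
      rw [div_mul_cancel₀ _ hu']
      rw [dist_comm 1]
      have := dist_triangle_left (expMap (u • v)) 1 (γ u)
      exact this
    have : ContinuousAt (fun s : ℝ => dist 1 (expMap (s • v))) 0 := by
      rw [continuousAt_iff_punctured_nhds]
      simpa [h0] using hp
    simpa [ContinuousAt, h0] using this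
  rw [continuous_iff_continuousAt]
  intro t
  rw [ContinuousAt, tendsto_iff_dist_tendsto_zero]
  have e : ∀ s : ℝ, dist (expMap (s • v)) (expMap (t • v)) = dist 1 (expMap ((t - s) • v)) := by
    intro s
    simpa using zvp_dist expMap hleft hexpadd 1 v s t
  simp only [e]
  refine hz.comp ?_
  have : Tendsto (fun s : ℝ => t - s) (𝓝 t) (𝓝 (t - t)) := by
    exact (continuous_const.sub continuous_id).tendsto t
  simpa using this

lemma zvp_lip (hleft : ∀ a p q : G, dist (a * p) (a * q) = dist p q)
    (hexpadd : ∀ (s t : ℝ) (v : H), expMap ((s + t) • v) = expMap (s • v) * expMap (t • v))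
    (hflow : ∀ (q : G) (v : ℝ → H), Continuous v →
      ∃ γ : ℝ → G, γ 0 = q ∧ IsC1H expMap γ v univ) (v : H) :
    ∃ K s₀ : ℝ, 0 ≤ K ∧ 0 < s₀ ∧ ∀ s : ℝ, |s| < s₀ → dist 1 (expMap (s • v)) ≤ K * |s| := by
  have h0 := zvp_exp_zero expMap hexpadd
  have hcont := zvp_cont expMap hleft hexpadd hflow v
  set f : ℝ → ℝ := fun s => dist 1 (expMap (s • v)) with hf
  have hfc : Continuous f := continuous_const.dist hcont
  have heven : ∀ s, f (-s) = f s := by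
    intro s
    have h1 := zvp_dist expMap hleft hexpadd 1 v s 0
    simp only [one_mul, zero_smul, h0, zero_sub] at h1
    simp only [hf]
    rw [← h1, dist_comm]
  refine zvp_baire f hfc (by simp [hf, h0]) heven ?_
  intro c
  obtain ⟨γ, -, hγc, -, hγd⟩ := hflow 1 (fun t => c t • v) (by fun_prop)
  let E : ℕ → Set ℝ := fun n => {u | ∀ t₁ t₂ : ℝ, |t₁ - u| < 1 / (n + 1 : ℝ) →
    |t₂ - u| < 1 / (n + 1 : ℝ) →
    |dist (γ t₁) (γ t₂) - f ((t₁ - t₂) * c u)| ≤ |t₁ - u| + |t₂ - u|}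
  have hEc : ∀ n, IsClosed (E n) := by
    intro n
    simp only [E, ofPred_forall]
    refine isClosed_iInter fun t₁ => isClosed_iInter fun t₂ => ?_
    simp only [imp_iff_not_or, not_lt, ofPred_or]
    refine IsClosed.union ?_ (IsClosed.union ?_ ?_)
    · exact isClosed_le (by fun_prop) (by fun_prop)
    · exact isClosed_le (by fun_prop) (by fun_prop)
    · exact isClosed_le (by fun_prop) (by fun_prop)
  have hEu : ⋃ n, E n = univ := by
    refine eq_univ_of_forall fun u => ?_
    have h1 : ∀ᶠ t in 𝓝 u, dist (γ t) (γ u * expMap (((t - u) * c u) • v)) ≤ |t - u| := by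
      have h2 := (hγd u (mem_univ _)).eventually (gt_mem_nhds (zero_lt_one' ℝ))
      rw [← compl_eq_univ_sdiff, eventually_nhdsWithin_iff] at h2
      filter_upwards [h2] with t ht
      by_cases htu : t = u
      · simp [htu, h0]
      · have h3 := ht htu
        have h4 : 0 < |t - u| := abs_pos.2 (sub_ne_zero.2 htu)
        rw [div_lt_one h4, smul_smul] at h3
        exact h3.le
    obtain ⟨ρ, hρ, hh⟩ := Metric.eventually_nhds_iff.1 h1
    obtain ⟨n, hn⟩ := exists_nat_one_div_lt hρ
    refine mem_iUnion.2 ⟨n, ?_⟩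
    intro t₁ t₂ ht₁ ht₂
    have a1 := hh (y := t₁) (by rw [Real.dist_eq]; exact ht₁.trans hn)
    have a2 := hh (y := t₂) (by rw [Real.dist_eq]; exact ht₂.trans hn)
    have a3 := zvp_dist expMap hleft hexpadd (γ u) v ((t₂ - u) * c u) ((t₁ - u) * c u)
    have e : (t₁ - u) * c u - (t₂ - u) * c u = (t₁ - t₂) * c u := by ring
    rw [e] at a3
    have a4 : f ((t₁ - t₂) * c u) = dist (γ u * expMap (((t₁ - u) * c u) • v))
        (γ u * expMap (((t₂ - u) * c u) • v)) := by
      rw [dist_comm, a3]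
    rw [a4]
    refine le_trans ?_ (add_le_add a1 a2)
    rw [← Real.dist_eq]
    exact dist_dist_dist_le _ _ _ _
  obtain ⟨n, u₀, hu₀⟩ := nonempty_interior_of_iUnion_of_closed hEc hEu
  rw [mem_interior_iff_mem_nhds, mem_nhds_iff_exists_Ioo_subset] at hu₀
  obtain ⟨a, b, hab, hsub⟩ := hu₀
  refine ⟨a, b, n, hab.1.trans hab.2, ?_⟩
  intro u hu u' hu' hd
  have hn : (0 : ℝ) < 1 / (n + 1 : ℝ) := by positivity
  have b1 := hsub hu u u' (by simpa using hn) (by rwa [abs_sub_comm])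
  have b2 := hsub hu' u u' hd (by simpa using hn)
  rw [sub_self, abs_zero, zero_add, abs_sub_comm u' u] at b1
  rw [sub_self, abs_zero, add_zero] at b2
  rw [abs_le] at *
  constructor <;> linarith [b1.1, b1.2, b2.1, b2.2]

/-- Curves staying at rest before `0` and after `T`, ending at `g`. -/
def ZvpReach (ε T : ℝ) (g : G) : Prop :=
  ∃ (β : ℝ → G) (β' : ℝ → H), IsC1H expMap β β' univ ∧ β 0 = 1 ∧ (∀ t ≤ 0, β' t = 0) ∧
    (∀ t ≥ T, β' t = 0) ∧ (∀ t ≥ T, β t = g) ∧ ∀ t, ‖β' t‖ < ε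

lemma zvp_isC1H (hcont : ∀ v : H, Continuous fun s : ℝ => expMap (s • v))
    (hexp0 : expMap 0 = 1) (β : ℝ → G) (β' : ℝ → H)
    (hβ' : Continuous β')
    (h : ∀ t, Tendsto (fun u => dist (β u) (β t * expMap ((u - t) • β' t)) / |u - t|)
      (𝓝[≠] t) (𝓝 0)) (hleft : ∀ a p q : G, dist (a * p) (a * q) = dist p q) :
    IsC1H expMap β β' univ := by
  refine ⟨?_, hβ'.continuousOn, fun t _ => by rw [← compl_eq_univ_sdiff]; exact h t⟩
  rw [continuousOn_univ, continuous_iff_continuousAt]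
  intro t
  rw [continuousAt_iff_punctured_nhds, tendsto_iff_dist_tendsto_zero]
  have hab : Tendsto (fun u : ℝ => |u - t|) (𝓝[≠] t) (𝓝 0) := by
    have : Tendsto (fun u : ℝ => |u - t|) (𝓝 t) (𝓝 |t - t|) :=
      (continuous_abs.comp (continuous_id.sub continuous_const)).tendsto t
    rw [sub_self, abs_zero] at this
    exact this.mono_left nhdsWithin_le_nhds
  have hab2 : Tendsto (fun u : ℝ => dist (expMap ((u - t) • β' t)) 1) (𝓝[≠] t) (𝓝 0) := by
    have h1 : Continuous fun u : ℝ => dist (expMap ((u - t) • β' t)) 1 :=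
      ((hcont (β' t)).comp (continuous_id.sub continuous_const)).dist continuous_const
    have := h1.tendsto t
    rw [sub_self, zero_smul, hexp0, dist_self] at this
    exact this.mono_left nhdsWithin_le_nhds
  have hs := ((h t).mul hab).add hab2
  rw [zero_mul, add_zero] at hs
  refine squeeze_zero' (Eventually.of_forall fun _ => dist_nonneg) ?_ hs
  filter_upwards [self_mem_nhdsWithin] with u hu
  have hu' : |u - t| ≠ 0 := abs_ne_zero.2 (sub_ne_zero.2 hu)
  rw [div_mul_cancel₀ _ hu']
  have e := hleft (β t) (expMap ((u - t) • β' t)) 1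
  rw [mul_one] at e
  rw [← e]
  exact dist_triangle _ _ _

lemma zvp_smooth_deriv_zero (x : ℝ) (hx : x ≤ 0 ∨ 1 ≤ x) : deriv Real.smoothTransition x = 0 := by
  rcases hx with hx | hx
  · refine IsLocalMin.deriv_eq_zero (Eventually.of_forall fun y => ?_)
    rw [Real.smoothTransition.zero_of_nonpos hx]
    exact Real.smoothTransition.nonneg y
  · refine IsLocalMax.deriv_eq_zero (Eventually.of_forall fun y => ?_)
    rw [Real.smoothTransition.one_of_one_le hx]
    exact Real.smoothTransition.le_one y

lemma zvp_smooth_deriv_cont : Continuous (deriv Real.smoothTransition) :=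
  (Real.smoothTransition.contDiff (n := 1)).continuous_deriv le_rfl

lemma zvp_smooth_bound : ∃ M : ℝ, 0 < M ∧ ∀ x, |deriv Real.smoothTransition x| ≤ M := by
  obtain ⟨M, hM⟩ := (isCompact_Icc (a := (0:ℝ)) (b := 1)).exists_bound_of_continuousOn
    zvp_smooth_deriv_cont.continuousOn
  refine ⟨max M 1, by positivity, fun x => ?_⟩
  by_cases hx : x ∈ Icc (0:ℝ) 1
  · exact (hM x hx).trans (le_max_left _ _)
  · rw [zvp_smooth_deriv_zero x, abs_zero]
    · positivity
    · by_contra hcon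
      push Not at hcon
      exact hx ⟨hcon.1.le, hcon.2.le⟩

lemma zvp_step (hleft : ∀ a p q : G, dist (a * p) (a * q) = dist p q)
    (hexpadd : ∀ (s t : ℝ) (v : H), expMap ((s + t) • v) = expMap (s • v) * expMap (t • v))
    (hflow : ∀ (q : G) (v : ℝ → H), Continuous v →
      ∃ γ : ℝ → G, γ 0 = q ∧ IsC1H expMap γ v univ)
    (ε M : ℝ) (hMb : ∀ x, |deriv Real.smoothTransition x| ≤ M)
    (T τ : ℝ) (hT : 0 ≤ T) (hτ : 0 < τ) (g : G) (v : H) (hv : M * ‖v‖ < ε)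
    (hR : ZvpReach expMap ε T g) : ZvpReach expMap ε (T + τ) (g * expMap (τ • v)) := by
  have h0 := zvp_exp_zero expMap hexpadd
  obtain ⟨K, s₀, hK, hs₀, hlip⟩ := zvp_lip expMap hleft hexpadd hflow v
  obtain ⟨β, β', ⟨hβc, hβ'c, hβd⟩, hβ0, hβ'0, hβ'T, hβT, hβb⟩ := hR
  set σ : ℝ → ℝ := fun u => τ * Real.smoothTransition ((u - T) / τ) with hσ
  set σ' : ℝ → ℝ := fun u => deriv Real.smoothTransition ((u - T) / τ) with hσ'
  have hσd : ∀ t, HasDerivAt σ (σ' t) t := by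
    intro t
    have h1 : HasDerivAt (fun u : ℝ => (u - T) / τ) (1 / τ) t :=
      ((hasDerivAt_id t).sub_const T).div_const τ
    have h2 : HasDerivAt Real.smoothTransition (σ' t) ((t - T) / τ) :=
      (((Real.smoothTransition.contDiff (n := 1)).differentiable one_ne_zero) _).hasDerivAt
    have h3 := (HasDerivAt.comp t h2 h1).const_mul τ
    have e : τ * (σ' t * (1 / τ)) = σ' t := by field_simp
    rw [e] at h3
    exact h3
  have hσ'c : Continuous σ' := zvp_smooth_deriv_cont.comp (by fun_prop)
  have hσz : ∀ t ≤ T, σ t = 0 := fun t ht => by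
    simp only [hσ]
    rw [Real.smoothTransition.zero_of_nonpos (div_nonpos_of_nonpos_of_nonneg (by linarith) hτ.le),
      mul_zero]
  have hσ'z : ∀ t ≤ T, σ' t = 0 := fun t ht =>
    zvp_smooth_deriv_zero _ (Or.inl (div_nonpos_of_nonpos_of_nonneg (by linarith) hτ.le))
  have hσ1 : ∀ t ≥ T + τ, σ t = τ := fun t ht => by
    simp only [hσ]
    rw [Real.smoothTransition.one_of_one_le ((one_le_div hτ).2 (by linarith)), mul_one]
  have hσ'1 : ∀ t ≥ T + τ, σ' t = 0 := fun t ht =>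
    zvp_smooth_deriv_zero _ (Or.inr ((one_le_div hτ).2 (by linarith)))
  have hrem : ∀ t, Tendsto (fun u => dist 1 (expMap ((σ u - σ t - (u - t) * σ' t) • v)) / |u - t|)
      (𝓝[≠] t) (𝓝 0) := by
    intro t
    have hslope := (hasDerivAt_iff_tendsto.1 (hσd t)).mono_left
      (nhdsWithin_le_nhds (s := {t}ᶜ))
    have hsm : ∀ᶠ u in 𝓝[≠] t, |σ u - σ t - (u - t) * σ' t| < s₀ := by
      have hc : Continuous fun u => |σ u - σ t - (u - t) * σ' t| := by
        have : Continuous σ := continuous_iff_continuousAt.2 fun t => (hσd t).continuousAt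
        fun_prop
      have := hc.tendsto t
      simp only [sub_self, zero_mul, abs_zero] at this
      exact (this.mono_left nhdsWithin_le_nhds).eventually (gt_mem_nhds hs₀)
    have hs := hslope.const_mul K
    rw [mul_zero] at hs
    refine squeeze_zero' (Eventually.of_forall fun _ => by positivity) ?_ hs
    filter_upwards [hsm] with u hu
    have := hlip _ hu
    rw [div_eq_inv_mul, Real.norm_eq_abs, Real.norm_eq_abs, smul_eq_mul]
    calc |u - t|⁻¹ * dist 1 (expMap ((σ u - σ t - (u - t) * σ' t) • v))
        ≤ |u - t|⁻¹ * (K * |σ u - σ t - (u - t) * σ' t|) := by gcongr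
      _ = _ := by ring
  refine ⟨fun u => β u * expMap (σ u • v), fun u => β' u + σ' u • v, ?_, ?_, ?_, ?_, ?_, ?_⟩
  · refine zvp_isC1H expMap (zvp_cont expMap hleft hexpadd hflow) h0 _ _ ?_ ?_ hleft
    · exact (continuousOn_univ.1 hβ'c).add (hσ'c.smul continuous_const)
    intro t
    rcases le_or_gt t T with ht | ht
    · have h1 := hβd t (mem_univ _)
      rw [← compl_eq_univ_sdiff] at h1
      have hs := (hrem t).add h1
      rw [add_zero] at hs
      refine squeeze_zero' (Eventually.of_forall fun _ => by positivity) ?_ hs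
      refine Eventually.of_forall fun u => ?_
      rw [hσz t ht, hσ'z t ht, zero_smul, h0, mul_one, add_zero, sub_zero, mul_zero,
        sub_zero, ← add_div]
      gcongr
      have e := zvp_dist expMap hleft hexpadd (β u) v 0 (σ u)
      rw [zero_smul, h0, mul_one, sub_zero] at e
      rw [← e, dist_comm (β u) (β u * _)]
      exact dist_triangle _ _ _
    · refine (hrem t).congr' ?_
      have : ∀ᶠ u in 𝓝[≠] t, T < u := nhdsWithin_le_nhds (lt_mem_nhds ht)
      filter_upwards [this] with u hu
      rw [hβT u hu.le, hβT t ht.le, hβ'T t ht.le, zero_add, mul_assoc, smul_smul, ← hexpadd,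
        dist_comm (g * _), zvp_dist expMap hleft hexpadd, sub_sub]
  · simp [hβ0, hσz 0 hT, h0]
  · intro t ht
    simp [hβ'0 t ht, hσ'z t (ht.trans hT)]
  · intro t ht
    simp [hβ'T t (by linarith), hσ'1 t ht]
  · intro t ht
    simp [hβT t (by linarith), hσ1 t ht]
  · intro t
    rcases le_or_gt t T with ht | ht
    · simpa [hσ'z t ht] using hβb t
    · simp only [hβ'T t ht.le, zero_add, norm_smul, Real.norm_eq_abs]
      refine lt_of_le_of_lt ?_ hv
      gcongr
      exact hMb _

lemma zvp_list (hleft : ∀ a p q : G, dist (a * p) (a * q) = dist p q)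
    (hexpadd : ∀ (s t : ℝ) (v : H), expMap ((s + t) • v) = expMap (s • v) * expMap (t • v))
    (hflow : ∀ (q : G) (v : ℝ → H), Continuous v →
      ∃ γ : ℝ → G, γ 0 = q ∧ IsC1H expMap γ v univ)
    (ε M : ℝ) (hMb : ∀ x, |deriv Real.smoothTransition x| ≤ M)
    (L : List (ℝ × H)) : ∀ (T : ℝ) (g : G), 0 ≤ T → (∀ p ∈ L, 0 < p.1 ∧ M * ‖p.2‖ < ε) →
    ZvpReach expMap ε T g →
    ZvpReach expMap ε (T + (L.map Prod.fst).sum) (g * (L.map fun p => expMap (p.1 • p.2)).prod) := by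
  induction L with
  | nil => intro T g _ _ h; simpa using h
  | cons p L ih =>
    intro T g hT hL hR
    have hp := hL p (by simp)
    have h1 := zvp_step expMap hleft hexpadd hflow ε M hMb T p.1 hT hp.1 g p.2 hp.2 hR
    have h2 := ih _ _ (by linarith) (fun q hq => hL q (by simp [hq])) h1
    simpa [add_assoc, mul_assoc] using h2

end zvp

/-- **The zero horizontal vector is pliable.** In a Carnot group (with the orbit-theorem
accessibility property, expressed by the hypothesis `hChow` on open families of piecewise
straight curves with small speeds), for every `ε > 0` the endpoints of horizontal `C¹`
curves `β` starting from `(0_G, 0)` with `‖β'‖_∞ < ε` form a neighborhood of `0_G`;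
moreover one may additionally require `β'(1) = 0`. -/
theorem zero_vector_pliable
    (expMap : H → G)
    (hleft : ∀ a p q : G, dist (a * p) (a * q) = dist p q)
    (hexpadd : ∀ (s t : ℝ) (v : H), expMap ((s + t) • v) = expMap (s • v) * expMap (t • v))
    -- Chow--Rashevskii/orbit theorem data: concatenations of straight curves with small
    -- speeds and total time less than 1 reach an (openly parametrized) neighborhood of 0_G
    (hChow : ∀ ε > 0, ∃ (k : ℕ) (V : Fin k → H) (t : Fin k → ℝ),
      (∀ i, 0 < t i) ∧ (∑ i, t i) < 1 ∧ (∀ i, ‖V i‖ < ε) ∧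
      ∀ O ∈ 𝓝 t,
        {g : G | ∃ τ ∈ O, (∀ i, 0 < τ i) ∧ (∑ i, τ i) < 1 ∧
          g = (List.ofFn fun i => expMap (τ i • V i)).prod} ∈ 𝓝 (1 : G))
    -- every continuous horizontal velocity profile integrates to a curve
    (hflow : ∀ (q : G) (v : ℝ → H), Continuous v →
      ∃ γ : ℝ → G, γ 0 = q ∧ IsC1H expMap γ v univ) :
    ∀ ε > 0,
      {g : G | ∃ β β', IsC1H expMap β β' (Icc 0 1) ∧ β 0 = 1 ∧ β' 0 = 0 ∧ β' 1 = 0 ∧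
        (∀ t ∈ Icc (0:ℝ) 1, ‖β' t‖ < ε) ∧ g = β 1} ∈ 𝓝 (1 : G) := by
  intro ε hε
  obtain ⟨M, hM, hMb⟩ := zvp_smooth_bound
  have h0 := zvp_exp_zero expMap hexpadd
  obtain ⟨k, V, t, -, -, hV, hO⟩ := hChow (ε / M) (by positivity)
  refine mem_of_superset (hO univ univ_mem) ?_
  rintro g ⟨τ, -, hτ, hsum, rfl⟩
  have base : ZvpReach expMap ε 0 1 := by
    refine ⟨fun _ => 1, fun _ => 0, ?_, rfl, fun _ _ => rfl, fun _ _ => rfl, fun _ _ => rfl, ?_⟩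
    · refine ⟨continuousOn_const, continuousOn_const, fun t _ => ?_⟩
      simp [h0, tendsto_const_nhds]
    · simpa using hε
  have := zvp_list expMap hleft hexpadd hflow ε M hMb (List.ofFn fun i => (τ i, V i)) 0 1 le_rfl
    (by
      intro p hp
      rw [List.mem_ofFn] at hp
      obtain ⟨i, rfl⟩ := hp
      refine ⟨hτ i, ?_⟩
      have := hV i
      rw [lt_div_iff₀ hM] at this
      simpa [mul_comm] using this) base
  rw [zero_add, one_mul, List.map_ofFn, List.map_ofFn, List.sum_ofFn] at this
  obtain ⟨β, β', ⟨hc, hc', hd⟩, hβ0, hβ'0, hβ'T, hβT, hb⟩ := this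
  have hle : (∑ i, (Prod.fst ∘ fun i => (τ i, V i)) i) ≤ 1 := hsum.le
  refine ⟨β, β', ⟨hc.mono (subset_univ _), hc'.mono (subset_univ _), fun s _ => ?_⟩, hβ0,
    hβ'0 0 le_rfl, hβ'T 1 hle, fun s _ => hb s, (hβT 1 hle).symm⟩
  exact (hd s (mem_univ _)).mono_left (nhdsWithin_mono _ (sdiff_subset_sdiff_left (subset_univ _)))
end
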